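/- Let (X₁, X₂) be jointly Gaussian with X₁ = m₁ + σ₁N₁, X₂ = m₂ + σ₂N₂, correlation ρ₁₂ between N₁ and N₂, and let a, b, c > 0. Then a·E[max(b·exp(X₁−m₁+m₁'), c·exp(X₂−m₂+m₂'))] reduces to the two-term Gaussian-CDF formula; specifically, for b, c > 0, E[max(b e^{X₁}, c e^{X₂})] = b·exp(m₁+σ₁²/2)·Φ((log(b/c)+m₁−m₂+σ₁²−ρ₁₂σ₁σ₂)/s) + c·exp(m₂+σ₂²/2)·Φ((log(c/b)+m₂−m₁+σ₂²−ρ₁₂σ₁σ₂)/s), where s = √(σ₁²+σ₂²−2ρ₁₂σ₁σ₂). -/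

import Mathlib

/-!
The maximum is `b e^{X₁}` where `D = σ₂N₂ - σ₁N₁` is at most `k = log (b/c) + m₁ - m₂`, and
`c e^{X₂}` elsewhere, so the expectation splits into two integrals `∫_{V ≤ k} e^U` of a jointly
Gaussian pair `(U, V)`. Each one is computed by exponential tilting: under the measure with density
`e^U / E[e^U]`, the variable `V` is again Gaussian with the same variance, its mean being shifted
to `Cov(U, V)`. This is read off from the moment-generating function
`E[e^{U + tV}] / E[e^U]`, which depends only on the laws of the combinations `U + tV` and which
determines the law of `V` (`map_tilted_eq_gaussianReal`).
-/

open MeasureTheory ProbabilityTheory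

/-- The standard Gaussian cumulative distribution function `Φ`. -/
noncomputable def stdGaussianCDF (x : ℝ) : ℝ :=
  ∫ t in Set.Iic x, Real.exp (-t ^ 2 / 2) / Real.sqrt (2 * Real.pi)

lemma gaussianReal_real_Iic (m x : ℝ) {v : ℝ} (hv : 0 < v) :
    (gaussianReal m v.toNNReal).real (Set.Iic x) = stdGaussianCDF ((x - m) / √v) := by
  have hs : 0 < √v := Real.sqrt_pos.2 hv
  have hmap : gaussianReal m v.toNNReal
      = ((gaussianReal 0 1).map (√v * ·)).map (· + m) := by
    rw [gaussianReal_map_const_mul, gaussianReal_map_add_const]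
    congr 1
    · simp
    · ext
      simp [Real.sq_sqrt hv.le, hv.le]
  have hpre : (fun z : ℝ => √v * z) ⁻¹' ((fun z : ℝ => z + m) ⁻¹' Set.Iic x)
      = Set.Iic ((x - m) / √v) := by
    ext z
    simp only [Set.mem_preimage, Set.mem_Iic]
    rw [le_div_iff₀ hs]
    constructor <;> intro h <;> linarith
  rw [measureReal_def, hmap, Measure.map_apply (by fun_prop) measurableSet_Iic,
    Measure.map_apply (by fun_prop) (measurableSet_Iic.preimage (by fun_prop)), hpre,
    gaussianReal_apply_eq_integral _ one_ne_zero,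
    ENNReal.toReal_ofReal (integral_nonneg fun _ => gaussianPDFReal_nonneg _ _ _), stdGaussianCDF]
  refine integral_congr_ae (ae_of_all _ fun t => ?_)
  simp [gaussianPDFReal]
  ring

/-- A law on the real line with the moment-generating function of a Gaussian is that Gaussian:
the moment-generating function is finite everywhere, so it extends to the whole complex plane and
determines the characteristic function. -/
lemma map_eq_gaussianReal_of_mgf {Ω : Type*} [MeasurableSpace Ω] {ν : Measure Ω}
    [IsProbabilityMeasure ν] {V : Ω → ℝ} (hV : AEMeasurable V ν) (m : ℝ) (v : NNReal)
    (h : ∀ t, mgf V ν t = Real.exp (m * t + v * t ^ 2 / 2)) :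
    ν.map V = gaussianReal m v := by
  have hset : integrableExpSet V ν = Set.univ := by
    ext t
    simp only [integrableExpSet, Set.mem_ofPred_eq, Set.mem_univ, iff_true]
    rw [← mgf_pos_iff, h]
    exact Real.exp_pos _
  have hmgf : mgf V ν = mgf id (gaussianReal m v) := by
    rw [mgf_id_gaussianReal]
    exact funext h
  have hc : complexMGF V ν = complexMGF id (gaussianReal m v) :=
    funext fun z => eqOn_complexMGF_of_mgf hmgf (by simp [hset])
  simpa using Measure.ext_of_complexMGF_eq hV aemeasurable_id hc

section Tilting

variable {Ω : Type*} [MeasurableSpace Ω] {μ : Measure Ω} {U V : Ω → ℝ}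
  {u κ v : ℝ}

/-- `E[e^{U + tV}]` for centred jointly Gaussian `U`, `V` with variances `u`, `v` and
covariance `κ`. -/
lemma mgf_add_mul
    (hpos : ∀ t, 0 ≤ u + 2 * t * κ + t ^ 2 * v)
    (h : ∀ t, μ.map (fun ω => U ω + t * V ω)
      = gaussianReal 0 (Real.toNNReal (u + 2 * t * κ + t ^ 2 * v))) (t : ℝ) :
    ∫ ω, Real.exp (U ω + t * V ω) ∂μ = Real.exp ((u + 2 * t * κ + t ^ 2 * v) / 2) := by
  have := mgf_gaussianReal (h t) 1
  simpa [mgf, Real.coe_toNNReal _ (hpos t)] using this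

lemma integral_exp_of_joint
    (hpos : ∀ t, 0 ≤ u + 2 * t * κ + t ^ 2 * v)
    (h : ∀ t, μ.map (fun ω => U ω + t * V ω)
      = gaussianReal 0 (Real.toNNReal (u + 2 * t * κ + t ^ 2 * v))) :
    ∫ ω, Real.exp (U ω) ∂μ = Real.exp (u / 2) := by
  simpa using mgf_add_mul hpos h 0

lemma integrable_exp_of_joint
    (hpos : ∀ t, 0 ≤ u + 2 * t * κ + t ^ 2 * v)
    (h : ∀ t, μ.map (fun ω => U ω + t * V ω)
      = gaussianReal 0 (Real.toNNReal (u + 2 * t * κ + t ^ 2 * v))) :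
    Integrable (fun ω => Real.exp (U ω)) μ := by
  -- a non-integrable function would have Bochner integral `0`
  refine not_imp_comm.1 integral_undef ?_
  rw [integral_exp_of_joint hpos h]
  exact ne_of_gt (Real.exp_pos _)

/-- Tilting by `U` shifts the mean of `V` by the covariance `κ` of `U` and `V`. -/
lemma map_tilted_eq_gaussianReal [IsProbabilityMeasure μ] (hV : AEMeasurable V μ)
    (hv : 0 < v)
    (hpos : ∀ t, 0 ≤ u + 2 * t * κ + t ^ 2 * v)
    (h : ∀ t, μ.map (fun ω => U ω + t * V ω)
      = gaussianReal 0 (Real.toNNReal (u + 2 * t * κ + t ^ 2 * v))) :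
    (μ.tilted U).map V = gaussianReal κ v.toNNReal := by
  have := isProbabilityMeasure_tilted (integrable_exp_of_joint hpos h)
  refine map_eq_gaussianReal_of_mgf (hV.mono_ac (tilted_absolutelyContinuous μ U)) _ _ fun t => ?_
  rw [mgf, integral_exp_tilted U (fun ω => t * V ω)]
  simp only [Pi.add_apply]
  rw [mgf_add_mul hpos h, integral_exp_of_joint hpos h, ← Real.exp_sub,
    Real.coe_toNNReal _ hv.le]
  congr 1
  ring

lemma setIntegral_exp_of_joint [IsProbabilityMeasure μ] (hV : AEMeasurable V μ)
    (hv : 0 < v)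
    (hpos : ∀ t, 0 ≤ u + 2 * t * κ + t ^ 2 * v)
    (h : ∀ t, μ.map (fun ω => U ω + t * V ω)
      = gaussianReal 0 (Real.toNNReal (u + 2 * t * κ + t ^ 2 * v))) (k : ℝ) :
    ∫ ω in {ω | V ω ≤ k}, Real.exp (U ω) ∂μ
      = Real.exp (u / 2) * stdGaussianCDF ((k - κ) / √v) := by
  rw [← gaussianReal_real_Iic _ _ hv, ← map_tilted_eq_gaussianReal hV hv hpos h,
    measureReal_def, Measure.map_apply_of_aemeasurable
      (hV.mono_ac (tilted_absolutelyContinuous μ U)) measurableSet_Iic,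
    tilted_apply_eq_ofReal_integral, integral_exp_of_joint hpos h,
    ENNReal.toReal_ofReal (integral_nonneg fun _ => by positivity), integral_div,
    mul_div_cancel₀ _ (Real.exp_pos _).ne']
  rfl

end Tilting

/-- For jointly Gaussian `X₁ = m₁ + σ₁N₁`, `X₂ = m₂ + σ₂N₂` with correlation `ρ₁₂`
between the standard normals `N₁, N₂`, and `b, c > 0`:
`E[max(b e^{X₁}, c e^{X₂})] = b e^{m₁+σ₁²/2} Φ((log(b/c)+m₁-m₂+σ₁²-ρ₁₂σ₁σ₂)/s)
+ c e^{m₂+σ₂²/2} Φ((log(c/b)+m₂-m₁+σ₂²-ρ₁₂σ₁σ₂)/s)` with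
`s = √(σ₁²+σ₂²-2ρ₁₂σ₁σ₂)`. -/
theorem stmt_15 {Ω : Type*} [MeasurableSpace Ω] (μ : Measure Ω) [IsProbabilityMeasure μ]
    (N₁ N₂ : Ω → ℝ) (m₁ m₂ σ₁ σ₂ ρ₁₂ : ℝ)
    (hσ₁ : 0 < σ₁) (hσ₂ : 0 < σ₂) (hρ : -1 < ρ₁₂) (hρ' : ρ₁₂ < 1)
    (hs : 0 < σ₁ ^ 2 + σ₂ ^ 2 - 2 * ρ₁₂ * σ₁ * σ₂)
    (hjoint : ∀ a b : ℝ,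
      Measure.map (fun ω => a * N₁ ω + b * N₂ ω) μ =
        gaussianReal 0 (Real.toNNReal (a ^ 2 + 2 * a * b * ρ₁₂ + b ^ 2)))
    (X₁ X₂ : Ω → ℝ)
    (hX₁ : X₁ = fun ω => m₁ + σ₁ * N₁ ω) (hX₂ : X₂ = fun ω => m₂ + σ₂ * N₂ ω)
    (b c : ℝ) (hb : 0 < b) (hc : 0 < c) :
    ∫ ω, max (b * Real.exp (X₁ ω)) (c * Real.exp (X₂ ω)) ∂μ =
      b * Real.exp (m₁ + σ₁ ^ 2 / 2) *
          stdGaussianCDF ((Real.log (b / c) + m₁ - m₂ + σ₁ ^ 2 - ρ₁₂ * σ₁ * σ₂) /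
            Real.sqrt (σ₁ ^ 2 + σ₂ ^ 2 - 2 * ρ₁₂ * σ₁ * σ₂)) +
        c * Real.exp (m₂ + σ₂ ^ 2 / 2) *
          stdGaussianCDF ((Real.log (c / b) + m₂ - m₁ + σ₂ ^ 2 - ρ₁₂ * σ₁ * σ₂) /
            Real.sqrt (σ₁ ^ 2 + σ₂ ^ 2 - 2 * ρ₁₂ * σ₁ * σ₂)) := by
  have hN₁ : AEMeasurable N₁ μ := by
    have := hjoint 1 0
    simp only [one_mul, zero_mul, add_zero] at this
    exact aemeasurable_of_map_neZero (by rw [this]; infer_instance)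
  have hN₂ : AEMeasurable N₂ μ := by
    have := hjoint 0 1
    simp only [one_mul, zero_mul, zero_add] at this
    exact aemeasurable_of_map_neZero (by rw [this]; infer_instance)
  have hq : ∀ x y : ℝ, 0 ≤ x ^ 2 + 2 * x * y * ρ₁₂ + y ^ 2 := fun x y => by
    nlinarith [sq_nonneg (x + y * ρ₁₂),
      mul_nonneg (sq_nonneg y) (mul_pos (sub_pos.2 hρ') (neg_lt_iff_pos_add.1 hρ)).le]
  set v := σ₁ ^ 2 + σ₂ ^ 2 - 2 * ρ₁₂ * σ₁ * σ₂ with hv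
  set k := Real.log (b / c) + m₁ - m₂ with hk
  set D : Ω → ℝ := fun ω => σ₂ * N₂ ω - σ₁ * N₁ ω with hD
  have hDm : AEMeasurable D μ := (hN₂.const_mul _).sub (hN₁.const_mul _)
  have hkneg : Real.log (c / b) + m₂ - m₁ = -k := by
    rw [hk, Real.log_div hb.ne' hc.ne', Real.log_div hc.ne' hb.ne']
    ring
  -- the pairs `(σ₁N₁, D)` and `(σ₂N₂, -D)` are jointly Gaussian
  have e₁ : ∀ t : ℝ, σ₁ ^ 2 + 2 * t * (ρ₁₂ * σ₁ * σ₂ - σ₁ ^ 2) + t ^ 2 * v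
      = (σ₁ - t * σ₁) ^ 2 + 2 * (σ₁ - t * σ₁) * (t * σ₂) * ρ₁₂ + (t * σ₂) ^ 2 := fun t => by
    rw [hv]; ring
  have e₂ : ∀ t : ℝ, σ₂ ^ 2 + 2 * t * (ρ₁₂ * σ₁ * σ₂ - σ₂ ^ 2) + t ^ 2 * v
      = (t * σ₁) ^ 2 + 2 * (t * σ₁) * (σ₂ - t * σ₂) * ρ₁₂ + (σ₂ - t * σ₂) ^ 2 := fun t => by
    rw [hv]; ring
  have p₁ : ∀ t : ℝ, 0 ≤ σ₁ ^ 2 + 2 * t * (ρ₁₂ * σ₁ * σ₂ - σ₁ ^ 2) + t ^ 2 * v :=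
    fun t => by rw [e₁]; exact hq _ _
  have p₂ : ∀ t : ℝ, 0 ≤ σ₂ ^ 2 + 2 * t * (ρ₁₂ * σ₁ * σ₂ - σ₂ ^ 2) + t ^ 2 * v :=
    fun t => by rw [e₂]; exact hq _ _
  have j₁ : ∀ t : ℝ, μ.map (fun ω => σ₁ * N₁ ω + t * D ω) = gaussianReal 0
      (Real.toNNReal (σ₁ ^ 2 + 2 * t * (ρ₁₂ * σ₁ * σ₂ - σ₁ ^ 2) + t ^ 2 * v)) := fun t => by
    rw [e₁, ← hjoint]
    congr 1
    ext ω
    simp only [hD]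
    ring
  have j₂ : ∀ t : ℝ, μ.map (fun ω => σ₂ * N₂ ω + t * -D ω) = gaussianReal 0
      (Real.toNNReal (σ₂ ^ 2 + 2 * t * (ρ₁₂ * σ₁ * σ₂ - σ₂ ^ 2) + t ^ 2 * v)) := fun t => by
    rw [e₂, ← hjoint]
    congr 1
    ext ω
    simp only [hD]
    ring
  have hDk : ∀ᵐ ω ∂μ, D ω ≠ k := by
    have hlaw : μ.map D = gaussianReal 0 v.toNNReal := by
      convert hjoint (-σ₁) σ₂ using 2
      · ext ω
        simp only [hD]
        ring
      · rw [hv]; congr 1; ring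
    have := nullSingletonClass_gaussianReal (μ := 0) (v := v.toNNReal)
      (Real.toNNReal_pos.2 hs).ne'
    refine ae_of_ae_map (p := fun x => x ≠ k) hDm ?_
    rw [hlaw]
    exact Measure.ae_ne _ k
  set S : Set Ω := {ω | D ω ≤ k} with hS
  have hSm : NullMeasurableSet S μ := nullMeasurableSet_le hDm aemeasurable_const
  have hSc : (Sᶜ : Set Ω) =ᵐ[μ] {ω | -D ω ≤ -k} := by
    filter_upwards [hDk] with ω hω
    refine propext ?_
    change ¬ (D ω ≤ k) ↔ -D ω ≤ -k
    rw [not_le, neg_le_neg_iff]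
    exact ⟨le_of_lt, fun h => lt_of_le_of_ne h (Ne.symm hω)⟩
  have hcmp : ∀ ω, D ω ≤ k ↔ c * Real.exp (X₂ ω) ≤ b * Real.exp (X₁ ω) := fun ω => by
    rw [← Real.log_le_log_iff (mul_pos hc (Real.exp_pos _)) (mul_pos hb (Real.exp_pos _)),
      Real.log_mul hc.ne' (Real.exp_pos _).ne', Real.log_mul hb.ne' (Real.exp_pos _).ne',
      Real.log_exp, Real.log_exp, hk, Real.log_div hb.ne' hc.ne', hX₁, hX₂]
    simp only [hD]
    constructor <;> intro h <;> linarith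
  have x₁ : ∀ ω, b * Real.exp (X₁ ω) = b * Real.exp m₁ * Real.exp (σ₁ * N₁ ω) := fun ω => by
    rw [hX₁, mul_assoc, ← Real.exp_add]
  have x₂ : ∀ ω, c * Real.exp (X₂ ω) = c * Real.exp m₂ * Real.exp (σ₂ * N₂ ω) := fun ω => by
    rw [hX₂, mul_assoc, ← Real.exp_add]
  have hint : Integrable (fun ω => max (b * Real.exp (X₁ ω)) (c * Real.exp (X₂ ω))) μ := by
    simp only [x₁, x₂]
    exact ((integrable_exp_of_joint p₁ j₁).const_mul _).sup
      ((integrable_exp_of_joint p₂ j₂).const_mul _)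
  have i₁ : ∫ ω in S, max (b * Real.exp (X₁ ω)) (c * Real.exp (X₂ ω)) ∂μ
      = b * Real.exp m₁ * ∫ ω in S, Real.exp (σ₁ * N₁ ω) ∂μ := by
    rw [← integral_const_mul]
    refine integral_congr_ae ?_
    filter_upwards [ae_restrict_mem₀ hSm] with ω hω
    rw [max_eq_left ((hcmp ω).1 hω), x₁]
  have i₂ : ∫ ω in Sᶜ, max (b * Real.exp (X₁ ω)) (c * Real.exp (X₂ ω)) ∂μ
      = c * Real.exp m₂ * ∫ ω in Sᶜ, Real.exp (σ₂ * N₂ ω) ∂μ := by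
    rw [← integral_const_mul]
    refine integral_congr_ae ?_
    filter_upwards [ae_restrict_mem₀ hSm.compl] with ω hω
    rw [max_eq_right (not_le.1 fun h => hω ((hcmp ω).2 h)).le, x₂]
  rw [← integral_add_compl₀ hSm hint, i₁, i₂, setIntegral_congr_set hSc,
    setIntegral_exp_of_joint hDm hs p₁ j₁ k,
    setIntegral_exp_of_joint (V := fun ω => -D ω) hDm.neg hs p₂ j₂ (-k), hkneg,
    Real.exp_add, Real.exp_add, sub_sub_eq_add_sub, sub_sub_eq_add_sub,
    add_sub_assoc, add_sub_assoc]
  ring
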